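/- Let G be a metabelian group, i.e., a group in which [[x, y], z] = 1 for all x, y, z ∈ G, where [a, b] = a⁻¹b⁻¹ab. Then the Jensen functional equation is stable on G: every pseudo-Jensen function f : G → ℝ satisfies the Jensen equation f(xy) + f(xy⁻¹) = 2f(x) for all x, y ∈ G (and f(1) = 0). -/

import Mathlib

/-!
The hypothesis says that commutators are central. Swapping the two variables in the quasi-Jensen
inequality and using `f (g⁻¹) = -f g` shows that the symmetrised defect
`h x y = f (x y) + f (y x) - 2 f x - 2 f y` is bounded (`jensenDefect_bound`).

If `x` and `y` commute then `h (x²) (y²) = 2 h x y`, so `h` vanishes on commuting pairs, i.e. `f` is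
additive on them (`map_mul_of_commute`). In general, with `c = [x, y]` central,
`x² y² = (x y)² c` and `y² x² = (y x)² c⁻¹`, so additivity along `c` gives `h (x²) (y²) = 2 h x y`
for all pairs, and hence `h = 0` (`jensenDefect_eq_zero`). Finally `f (x y) = f (y x) + f c` and
`f (x y⁻¹) = f (y⁻¹ x) - f c`, so adding `h x y = 0` and `h x y⁻¹ = 0` yields the Jensen equation.
-/

/-- A function `f : G → ℝ` is quasi-Jensen if there is `c > 0` with
`|f(xy) + f(xy⁻¹) − 2f(x)| ≤ c` for all `x, y`. -/
def QuasiJensen {G : Type*} [Group G] (f : G → ℝ) : Prop :=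
  ∃ c > (0 : ℝ), ∀ x y : G, |f (x * y) + f (x * y⁻¹) - 2 * f x| ≤ c

/-- A function `f : G → ℝ` is pseudo-Jensen if it is quasi-Jensen and
`f(xⁿ) = n·f(x)` for all `x` and all integers `n`. -/
def PseudoJensen {G : Type*} [Group G] (f : G → ℝ) : Prop :=
  QuasiJensen f ∧ ∀ (x : G) (n : ℤ), f (x ^ n) = (n : ℝ) * f x

/-- The symmetrised Jensen defect `f (x y) + f (y x) - 2 f x - 2 f y`. -/
def jensenDefect {G : Type*} [Group G] (f : G → ℝ) (x y : G) : ℝ :=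
  f (x * y) + f (y * x) - 2 * f x - 2 * f y

lemma eq_zero_of_forall_two_pow_mul_le {u C : ℝ} (h : ∀ n : ℕ, |2 ^ n * u| ≤ C) : u = 0 := by
  by_contra hu
  have hpos : 0 < |u| := abs_pos.mpr hu
  obtain ⟨n, hn⟩ := pow_unbounded_of_one_lt (C / |u|) (one_lt_two : (1 : ℝ) < 2)
  have h1 := h n
  rw [abs_mul, abs_of_pos (by positivity : (0 : ℝ) < 2 ^ n)] at h1
  rw [div_lt_iff₀ hpos] at hn
  linarith

section PseudoJensen

variable {G : Type*} [Group G] {f : G → ℝ}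

lemma PseudoJensen.map_inv (hf : PseudoJensen f) (x : G) : f x⁻¹ = -f x := by
  simpa using hf.2 x (-1)

lemma PseudoJensen.map_mul_self (hf : PseudoJensen f) (x : G) : f (x * x) = 2 * f x := by
  have h := hf.2 x 2
  rw [zpow_two] at h
  simpa using h

lemma PseudoJensen.jensenDefect_bound (hf : PseudoJensen f) :
    ∃ C, ∀ x y : G, |jensenDefect f x y| ≤ C := by
  obtain ⟨c, -, hc⟩ := hf.1
  refine ⟨2 * c, fun x y => ?_⟩
  have h1 := abs_le.mp (hc x y)
  have h2 := abs_le.mp (hc y x)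
  have h3 : f (y * x⁻¹) = -f (x * y⁻¹) := by
    rw [← hf.map_inv]
    congr 1
    group
  rw [jensenDefect, abs_le]
  constructor <;> linarith

/-- A bounded defect that doubles under simultaneous squaring, along a relation `P` stable under
squaring, vanishes on `P`. -/
lemma PseudoJensen.jensenDefect_eq_zero_of_doubling (hf : PseudoJensen f) (P : G → G → Prop)
    (hP : ∀ x y, P x y → P (x * x) (y * y))
    (hd : ∀ x y, P x y → jensenDefect f (x * x) (y * y) = 2 * jensenDefect f x y)
    {x y : G} (hxy : P x y) : jensenDefect f x y = 0 := by
  obtain ⟨C, hC⟩ := hf.jensenDefect_bound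
  have key : ∀ n : ℕ, ∀ x y, P x y → |2 ^ n * jensenDefect f x y| ≤ C := by
    intro n
    induction n with
    | zero => intro x y _; simpa using hC x y
    | succ n ih =>
      intro x y h
      have := ih _ _ (hP x y h)
      rwa [hd x y h, ← mul_assoc, ← pow_succ] at this
  exact eq_zero_of_forall_two_pow_mul_le fun n => key n x y hxy

lemma PseudoJensen.map_mul_of_commute (hf : PseudoJensen f) {x y : G} (hxy : Commute x y) :
    f (x * y) = f x + f y := by
  have h := hf.jensenDefect_eq_zero_of_doubling Commute
    (fun x y h => (h.mul_left h).mul_right (h.mul_left h))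
    (fun x y h => by
      have e1 : x * x * (y * y) = x * y * (x * y) := (h.mul_mul_mul_comm x y)
      have e2 : y * y * (x * x) = y * x * (y * x) := (h.symm.mul_mul_mul_comm y x)
      simp only [jensenDefect, e1, e2, hf.map_mul_self]
      ring) hxy
  rw [jensenDefect, ← hxy.eq] at h
  linarith

lemma PseudoJensen.jensenDefect_eq_zero (hf : PseudoJensen f)
    (hcen : ∀ x y z : G, Commute (x⁻¹ * y⁻¹ * x * y) z) (x y : G) :
    jensenDefect f x y = 0 := by
  refine hf.jensenDefect_eq_zero_of_doubling (fun _ _ => True) (fun _ _ _ => trivial)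
    (fun x y _ => ?_) trivial
  obtain ⟨c, hc⟩ : ∃ c, c = x⁻¹ * y⁻¹ * x * y := ⟨_, rfl⟩
  have hz : ∀ z, Commute c z := fun z => hc ▸ hcen x y z
  have hxy : x * y = y * x * c := by rw [hc]; group
  have hyx : y * x = x * y * c⁻¹ := by rw [hxy]; group
  have e1 : x * x * (y * y) = x * y * (x * y) * c := by
    calc x * x * (y * y) = x * (x * y) * y := by group
      _ = x * (y * x * c) * y := by rw [← hxy]
      _ = x * y * x * (c * y) := by group
      _ = x * y * (x * y) * c := by rw [(hz y).eq]; group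
  have e2 : y * y * (x * x) = y * x * (y * x) * c⁻¹ := by
    calc y * y * (x * x) = y * (y * x) * x := by group
      _ = y * (x * y * c⁻¹) * x := by rw [← hyx]
      _ = y * x * y * (c⁻¹ * x) := by group
      _ = y * x * (y * x) * c⁻¹ := by rw [(hz x).inv_left.eq]; group
  rw [jensenDefect, e1, e2, hf.map_mul_of_commute (hz _).symm,
    hf.map_mul_of_commute (hz _).inv_left.symm]
  simp only [jensenDefect, hf.map_mul_self, hf.map_inv]
  ring

end PseudoJensen

/-- Theorem 3.11.  The Jensen equation is stable on any
metabelian group `G` (a group with `[[x, y], z] = 1` for all `x, y, z`, where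
`[a, b] = a⁻¹b⁻¹ab`): every pseudo-Jensen function `f : G → ℝ` satisfies the
Jensen equation, and `f(1) = 0`. -/
theorem stmt17 {G : Type*} [Group G]
    (hmeta : ∀ x y z : G,
      (x⁻¹ * y⁻¹ * x * y)⁻¹ * z⁻¹ * (x⁻¹ * y⁻¹ * x * y) * z = 1)
    (f : G → ℝ) (hf : PseudoJensen f) :
    (∀ x y : G, f (x * y) + f (x * y⁻¹) = 2 * f x) ∧ f 1 = 0 := by
  have hcen : ∀ x y z : G, Commute (x⁻¹ * y⁻¹ * x * y) z := by
    intro x y z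
    have h := hmeta x y z
    generalize x⁻¹ * y⁻¹ * x * y = c at h
    have h2 : (z * c)⁻¹ * (c * z) = 1 := by rw [← h]; group
    exact (inv_mul_eq_one.mp h2).symm
  refine ⟨fun x y => ?_, by simpa using hf.2 1 0⟩
  have h1 := hf.jensenDefect_eq_zero hcen x y
  have h2 := hf.jensenDefect_eq_zero hcen x y⁻¹
  obtain ⟨c, hc⟩ : ∃ c, c = x⁻¹ * y⁻¹ * x * y := ⟨_, rfl⟩
  have hz : ∀ z, Commute c z := fun z => hc ▸ hcen x y z
  have hxy : x * y = y * x * c := by rw [hc]; group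
  have hxy' : x * y⁻¹ = y⁻¹ * x * c⁻¹ := by
    calc x * y⁻¹ = y⁻¹ * (y * x * c) * c⁻¹ * y⁻¹ := by group
      _ = y⁻¹ * x * (y * c⁻¹) * y⁻¹ := by rw [← hxy]; group
      _ = y⁻¹ * x * c⁻¹ := by rw [← (hz y).inv_left.eq]; group
  have h3 : f (x * y) = f (y * x) + f c := by
    rw [hxy, hf.map_mul_of_commute (hz _).symm]
  have h4 : f (x * y⁻¹) = f (y⁻¹ * x) - f c := by
    rw [hxy', hf.map_mul_of_commute (hz _).inv_left.symm, hf.map_inv, sub_eq_add_neg]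
  simp only [jensenDefect, hf.map_inv] at h1 h2
  linarith
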